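/- Let K, L be convex subsets of ℝⁿ and t ∈ (0,1). Then γⁿ((1−t)K + tL) ≥ γⁿ(K)^{1−t} · γⁿ(L)^t, where γⁿ is the standard Gaussian measure on ℝⁿ. -/

import Mathlib

open MeasureTheory Pointwise

noncomputable def gaussian (n : ℕ) : Measure (EuclideanSpace ℝ (Fin n)) :=
  volume.withDensity fun x =>
    ENNReal.ofReal ((2 * Real.pi) ^ (-(n : ℝ) / 2) * Real.exp (-‖x‖ ^ 2 / 2))

open Set
open scoped ENNReal

/-!
On the line, compact sets `A` and `B` have essentially disjoint translates `A + min B` and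
`max A + B` inside `A + B`, so `|A| + |B| ≤ |A + B|`. Applied to superlevel sets and integrated over
the levels, this gives the Prékopa–Leindler inequality on `ℝ`. Fubini's theorem carries that
inequality to products, hence to `ℝⁿ`, and multiplying the three functions by a log-concave density
carries it to the Gaussian measure. The inequality for sets is the case of indicator functions.
-/

section ENNReal

theorem rpow_mul_rpow_self_of_add_eq_one {a b : ℝ} (ha : 0 ≤ a) (hb : 0 ≤ b) (hab : a + b = 1)
    (x : ℝ≥0∞) : x ^ a * x ^ b = x := by
  rw [← ENNReal.rpow_add_of_nonneg a b ha hb, hab, ENNReal.rpow_one]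

theorem ennreal_geom_mean_le_arith_mean2_weighted {a b : ℝ} (ha : 0 < a) (hb : 0 < b)
    (hab : a + b = 1) (x y : ℝ≥0∞) : x ^ a * y ^ b ≤ .ofReal a * x + .ofReal b * y := by
  have hpq : a⁻¹.HolderConjugate b⁻¹ := .inv_inv ha hb hab
  have young := ENNReal.young_inequality (x ^ a) (y ^ b) hpq
  rwa [ENNReal.rpow_rpow_inv ha.ne', ENNReal.rpow_rpow_inv hb.ne', ENNReal.ofReal_inv_of_pos ha,
    ENNReal.ofReal_inv_of_pos hb, div_eq_mul_inv, div_eq_mul_inv, inv_inv, inv_inv, mul_comm x,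
    mul_comm y] at young

theorem volume_setOf_ofReal_lt_inter_Ioi (y : ℝ≥0∞) :
    volume ({s : ℝ | ENNReal.ofReal s < y} ∩ Ioi 0) = y := by
  induction y with
  | top => simp
  | coe y =>
    have : {s : ℝ | ENNReal.ofReal s < y} ∩ Ioi 0 = Ioo 0 (y : ℝ) := by
      ext s
      simp only [mem_inter_iff, mem_ofPred_eq, mem_Ioi, mem_Ioo, and_comm (a := 0 < s)]
      refine and_congr_left fun hs => ?_
      rw [← ENNReal.ofReal_coe_nnreal, ENNReal.ofReal_lt_ofReal_iff_of_nonneg hs.le]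
    simp [this]

end ENNReal

section Lintegral

variable {α : Type*} [MeasurableSpace α] {f : α → ℝ≥0∞}

theorem lintegral_eq_lintegral_Ioi_measure_ofReal_lt (μ : Measure α) [SFinite μ]
    (hf : Measurable f) :
    ∫⁻ x, f x ∂μ = ∫⁻ s in Ioi (0 : ℝ), μ {x | ENNReal.ofReal s < f x} := by
  have hS : MeasurableSet {p : α × ℝ | ENNReal.ofReal p.2 < f p.1} :=
    measurableSet_lt (by fun_prop) (by fun_prop)
  calc ∫⁻ x, f x ∂μ
      = ∫⁻ x, volume.restrict (Ioi 0) {s | ENNReal.ofReal s < f x} ∂μ := by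
        refine lintegral_congr fun x => ?_
        rw [Measure.restrict_apply' measurableSet_Ioi, volume_setOf_ofReal_lt_inter_Ioi]
    _ = μ.prod (volume.restrict (Ioi 0)) {p | ENNReal.ofReal p.2 < f p.1} :=
        (Measure.prod_apply hS).symm
    _ = ∫⁻ s in Ioi (0 : ℝ), μ {x | ENNReal.ofReal s < f x} := Measure.prod_apply_symm hS

theorem lintegral_eq_iSup_lintegral_min_natCast (μ : Measure α) (hf : Measurable f) :
    ∫⁻ x, f x ∂μ = ⨆ k : ℕ, ∫⁻ x, min (f x) k ∂μ := by
  rw [← lintegral_iSup (fun k => hf.min measurable_const)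
    fun i j hij x => min_le_min_left _ (Nat.cast_le.2 hij)]
  exact lintegral_congr fun x => by rw [← inf_iSup_eq, ENNReal.iSup_natCast, inf_top_eq]

end Lintegral

section BrunnMinkowski

theorem brunnMinkowski_real_of_isCompact {A B : Set ℝ} (hA : IsCompact A) (hB : IsCompact B)
    (hA₀ : A.Nonempty) (hB₀ : B.Nonempty) : volume A + volume B ≤ volume (A + B) := by
  obtain ⟨p, hpA, hp⟩ := hA.exists_isGreatest hA₀
  obtain ⟨q, hqB, hq⟩ := hB.exists_isLeast hB₀
  have hinter : volume ((A + {q}) ∩ ({p} + B)) = 0 := by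
    refine measure_mono_null (t := {p + q}) ?_ Real.volume_singleton
    rw [add_singleton, singleton_add]
    rintro _ ⟨⟨x, hx, rfl⟩, ⟨y, hy, hxy⟩⟩
    replace hxy : p + y = x + q := hxy
    have hxp : x ≤ p := hp hx
    have hqy : q ≤ y := hq hy
    change x + q = p + q
    linarith
  calc volume A + volume B = volume (A + {q}) + volume ({p} + B) := by simp
    _ = volume ((A + {q}) ∪ ({p} + B)) := by
      rw [← measure_union_add_inter _ (isCompact_singleton.add hB).measurableSet, hinter, add_zero]
    _ ≤ volume (A + B) := measure_mono <| union_subset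
      (add_subset_add_left (singleton_subset_iff.2 hqB))
      (add_subset_add_right (singleton_subset_iff.2 hpA))

theorem brunnMinkowski_real {A B : Set ℝ} (hA : MeasurableSet A) (hB : MeasurableSet B)
    (hA₀ : A.Nonempty) (hB₀ : B.Nonempty) : volume A + volume B ≤ volume (A + B) := by
  obtain ⟨x, hx⟩ := hA₀
  obtain ⟨y, hy⟩ := hB₀
  rw [hA.measure_eq_iSup_isCompact, hB.measure_eq_iSup_isCompact]
  simp only [iSup_and']
  refine ENNReal.biSup_add_biSup_le' ⟨∅, empty_subset _, isCompact_empty⟩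
    ⟨∅, empty_subset _, isCompact_empty⟩ fun K ⟨hKA, hK⟩ L ⟨hLB, hL⟩ => ?_
  calc volume K + volume L ≤ volume (insert x K) + volume (insert y L) := by
        gcongr <;> exact subset_insert _ _
    _ ≤ volume (insert x K + insert y L) := brunnMinkowski_real_of_isCompact (hK.insert x)
        (hL.insert y) (insert_nonempty _ _) (insert_nonempty _ _)
    _ ≤ volume (A + B) :=
        measure_mono (add_subset_add (insert_subset hx hKA) (insert_subset hy hLB))

theorem brunnMinkowski_real_smul {A B : Set ℝ} (hA : MeasurableSet A) (hB : MeasurableSet B)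
    (hA₀ : A.Nonempty) (hB₀ : B.Nonempty) {a b : ℝ} (ha : 0 < a) (hb : 0 < b) :
    .ofReal a * volume A + .ofReal b * volume B ≤ volume (a • A + b • B) := by
  simpa [abs_of_pos ha, abs_of_pos hb] using
    brunnMinkowski_real (hA.const_smul₀ a) (hB.const_smul₀ b) hA₀.smul_set hB₀.smul_set

end BrunnMinkowski

/-- Validity of the Prékopa–Leindler inequality for `μ`, the functional form of log-concavity of
`μ`; unlike the inequality for sets, it passes to products. Functions take values in `ℝ≥0∞`, so no
integrability enters, and since `0 * ∞ = 0` nothing is required of `h` where `f x` or `g y`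
vanishes. -/
def PrekopaLeindler {E : Type*} [AddCommGroup E] [Module ℝ E] [MeasurableSpace E]
    (μ : Measure E) : Prop :=
  ∀ ⦃a b : ℝ⦄, 0 < a → 0 < b → a + b = 1 → ∀ ⦃f g h : E → ℝ≥0∞⦄,
    Measurable f → Measurable g → Measurable h →
    (∀ x y, f x ^ a * g y ^ b ≤ h (a • x + b • y)) →
    (∫⁻ x, f x ∂μ) ^ a * (∫⁻ x, g x ∂μ) ^ b ≤ ∫⁻ x, h x ∂μ

/-- Log-concavity of a density `ρ`, the condition under which `μ.withDensity ρ` inherits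
`PrekopaLeindler`. It is stated multiplicatively, with values in `ℝ≥0∞`, so that `ρ` may vanish. -/
def LogConcave {E : Type*} [AddCommGroup E] [Module ℝ E] (ρ : E → ℝ≥0∞) : Prop :=
  ∀ ⦃a b : ℝ⦄, 0 < a → 0 < b → a + b = 1 → ∀ x y, ρ x ^ a * ρ y ^ b ≤ ρ (a • x + b • y)

section Real

variable {f g h : ℝ → ℝ≥0∞} {a b : ℝ}

theorem add_lintegral_le_lintegral_of_iSup_eq (ha : 0 < a) (hb : 0 < b) (hab : a + b = 1)
    (hf : Measurable f) (hg : Measurable g) (hh : Measurable h) (hfg : ⨆ x, f x = ⨆ x, g x)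
    (hle : ∀ x y, f x ^ a * g y ^ b ≤ h (a • x + b • y)) :
    .ofReal a * (∫⁻ x, f x) + .ofReal b * (∫⁻ x, g x) ≤ ∫⁻ x, h x := by
  have hmeas (u : ℝ → ℝ≥0∞) : Measurable fun s : ℝ => volume {x | ENNReal.ofReal s < u x} :=
    Antitone.measurable fun s t hst => measure_mono fun x hx =>
      (ENNReal.ofReal_le_ofReal hst).trans_lt hx
  simp only [lintegral_eq_lintegral_Ioi_measure_ofReal_lt volume, hf, hg, hh]
  rw [← lintegral_const_mul _ (hmeas f), ← lintegral_const_mul _ (hmeas g),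
    ← lintegral_add_left ((hmeas f).const_mul _)]
  refine lintegral_mono fun s => ?_
  rcases lt_or_ge (ENNReal.ofReal s) (⨆ x, f x) with hs | hs
  · have hf_nonempty : {x | ENNReal.ofReal s < f x}.Nonempty := lt_iSup_iff.1 hs
    have hg_nonempty : {x | ENNReal.ofReal s < g x}.Nonempty := lt_iSup_iff.1 (hs.trans_eq hfg)
    refine (brunnMinkowski_real_smul (measurableSet_lt measurable_const hf)
      (measurableSet_lt measurable_const hg) hf_nonempty hg_nonempty ha hb).trans (measure_mono ?_)
    rintro _ ⟨_, ⟨x, hx, rfl⟩, _, ⟨y, hy, rfl⟩, rfl⟩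
    calc ENNReal.ofReal s = ENNReal.ofReal s ^ a * ENNReal.ofReal s ^ b :=
          (rpow_mul_rpow_self_of_add_eq_one ha.le hb.le hab _).symm
      _ < f x ^ a * g y ^ b :=
          ENNReal.mul_lt_mul (ENNReal.rpow_lt_rpow hx ha) (ENNReal.rpow_lt_rpow hy hb)
      _ ≤ h (a • x + b • y) := hle x y
  · have hf_empty : {x | ENNReal.ofReal s < f x} = ∅ :=
      eq_empty_of_forall_notMem fun x => ((le_iSup f x).trans hs).not_gt
    have hg_empty : {x | ENNReal.ofReal s < g x} = ∅ :=
      eq_empty_of_forall_notMem fun x => ((le_iSup g x).trans (hfg ▸ hs)).not_gt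
    simp [hf_empty, hg_empty]

theorem rpow_lintegral_mul_le_lintegral_of_iSup_ne_top (ha : 0 < a) (hb : 0 < b) (hab : a + b = 1)
    (hf : Measurable f) (hg : Measurable g) (hh : Measurable h)
    (hf_top : ⨆ x, f x ≠ ∞) (hg_top : ⨆ x, g x ≠ ∞)
    (hle : ∀ x y, f x ^ a * g y ^ b ≤ h (a • x + b • y)) :
    (∫⁻ x, f x) ^ a * (∫⁻ x, g x) ^ b ≤ ∫⁻ x, h x := by
  rcases eq_or_ne (⨆ x, f x) 0 with hf₀ | hf₀
  · simp [ENNReal.iSup_eq_zero.1 hf₀, ha]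
  rcases eq_or_ne (⨆ x, g x) 0 with hg₀ | hg₀
  · simp [ENNReal.iSup_eq_zero.1 hg₀, hb]
  set c := (⨆ x, g x) / ⨆ x, f x
  have hc₀ : c ^ a ≠ 0 := by simp [c, ENNReal.div_eq_zero_iff, ENNReal.div_eq_top, *]
  have hc_top : c ^ a ≠ ∞ := by simp [c, ENNReal.div_eq_zero_iff, ENNReal.div_eq_top, *]
  have hiSup : ⨆ x, c * f x = ⨆ x, g x := by
    rw [← ENNReal.mul_iSup, ENNReal.div_mul_cancel hf₀ hf_top]
  have hscaled : ∀ x y, (c * f x) ^ a * g y ^ b ≤ c ^ a * h (a • x + b • y) := fun x y => by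
    rw [ENNReal.mul_rpow_of_nonneg _ _ ha.le, mul_assoc]
    gcongr
    exact hle x y
  refine (ENNReal.mul_le_mul_iff_right hc₀ hc_top).1 ?_
  calc c ^ a * ((∫⁻ x, f x) ^ a * (∫⁻ x, g x) ^ b)
      = (∫⁻ x, c * f x) ^ a * (∫⁻ x, g x) ^ b := by
        rw [lintegral_const_mul _ hf, ENNReal.mul_rpow_of_nonneg _ _ ha.le, mul_assoc]
    _ ≤ .ofReal a * (∫⁻ x, c * f x) + .ofReal b * (∫⁻ x, g x) :=
        ennreal_geom_mean_le_arith_mean2_weighted ha hb hab _ _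
    _ ≤ ∫⁻ x, c ^ a * h x := add_lintegral_le_lintegral_of_iSup_eq ha hb hab (hf.const_mul c) hg
        (hh.const_mul _) hiSup hscaled
    _ = c ^ a * ∫⁻ x, h x := lintegral_const_mul _ hh

theorem prekopaLeindler_real : PrekopaLeindler (volume : Measure ℝ) := by
  intro a b ha hb hab f g h hf hg hh hle
  have hiSup_top (u : ℝ → ℝ≥0∞) (k : ℕ) : ⨆ x, min (u x) k ≠ ∞ :=
    ((iSup_le fun _ => min_le_right _ _).trans_lt (ENNReal.natCast_lt_top k)).ne
  have iSup_rpow {c : ℝ} (hc : 0 < c) (u : ℕ → ℝ≥0∞) : (⨆ k, u k) ^ c = ⨆ k, u k ^ c :=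
    (ENNReal.orderIsoRpow c hc).map_iSup u
  rw [lintegral_eq_iSup_lintegral_min_natCast volume hf,
    lintegral_eq_iSup_lintegral_min_natCast volume hg, iSup_rpow ha, iSup_rpow hb]
  simp only [ENNReal.iSup_mul, ENNReal.mul_iSup]
  refine iSup₂_le fun l k => ?_
  refine rpow_lintegral_mul_le_lintegral_of_iSup_ne_top ha hb hab (hf.min measurable_const)
    (hg.min measurable_const) hh (hiSup_top f k) (hiSup_top g l) fun x y => le_trans ?_ (hle x y)
  gcongr <;> exact min_le_left _ _

end Real

section LogConcave

variable {E : Type*} [AddCommGroup E] [Module ℝ E]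

theorem logConcave_const (c : ℝ≥0∞) : LogConcave fun _ : E => c :=
  fun _ _ ha hb hab _ _ => (rpow_mul_rpow_self_of_add_eq_one ha.le hb.le hab c).le

theorem LogConcave.mul {ρ σ : E → ℝ≥0∞} (hρ : LogConcave ρ) (hσ : LogConcave σ) :
    LogConcave fun x => ρ x * σ x := by
  intro a b ha hb hab x y
  rw [ENNReal.mul_rpow_of_nonneg _ _ ha.le, ENNReal.mul_rpow_of_nonneg _ _ hb.le, mul_mul_mul_comm]
  exact mul_le_mul' (hρ ha hb hab x y) (hσ ha hb hab x y)

theorem logConcave_ofReal_exp_neg {φ : E → ℝ} (hφ : ConvexOn ℝ univ φ) :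
    LogConcave fun x => .ofReal (Real.exp (-φ x)) := by
  intro a b ha hb hab x y
  have hconv : φ (a • x + b • y) ≤ a * φ x + b * φ y :=
    hφ.2 (mem_univ x) (mem_univ y) ha.le hb.le hab
  rw [ENNReal.ofReal_rpow_of_pos (Real.exp_pos _), ENNReal.ofReal_rpow_of_pos (Real.exp_pos _),
    ← ENNReal.ofReal_mul (by positivity), ← Real.exp_mul, ← Real.exp_mul, ← Real.exp_add]
  refine ENNReal.ofReal_le_ofReal (Real.exp_le_exp.2 ?_)
  linarith

end LogConcave

section PrekopaLeindler

variable {E F : Type*} [AddCommGroup E] [Module ℝ E] [MeasurableSpace E]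
  [AddCommGroup F] [Module ℝ F] [MeasurableSpace F] {μ : Measure E}

theorem prekopaLeindler_dirac (x : E) : PrekopaLeindler (Measure.dirac x) := by
  intro a b _ _ hab f g h hf hg hh hle
  rw [lintegral_dirac' x hf, lintegral_dirac' x hg, lintegral_dirac' x hh]
  simpa only [Convex.combo_self hab x] using hle x x

namespace PrekopaLeindler

theorem prod {ν : Measure F} [SFinite ν] (hμ : PrekopaLeindler μ) (hν : PrekopaLeindler ν) :
    PrekopaLeindler (μ.prod ν) := by
  intro a b ha hb hab f g h hf hg hh hle
  rw [lintegral_prod _ hf.aemeasurable, lintegral_prod _ hg.aemeasurable,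
    lintegral_prod _ hh.aemeasurable]
  refine hμ ha hb hab hf.lintegral_prod_right' hg.lintegral_prod_right' hh.lintegral_prod_right'
    fun x x' => ?_
  exact hν ha hb hab (hf.comp measurable_prodMk_left) (hg.comp measurable_prodMk_left)
    (hh.comp measurable_prodMk_left) fun y y' => hle (x, y) (x', y')

theorem map (hμ : PrekopaLeindler μ) (L : E →ₗ[ℝ] F) (hL : Measurable L) :
    PrekopaLeindler (μ.map L) := by
  intro a b ha hb hab f g h hf hg hh hle
  rw [lintegral_map hf hL, lintegral_map hg hL, lintegral_map hh hL]
  refine hμ ha hb hab (hf.comp hL) (hg.comp hL) (hh.comp hL) fun x y => ?_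
  simpa only [Function.comp_apply, map_add, map_smul] using hle (L x) (L y)

theorem withDensity (hμ : PrekopaLeindler μ) {ρ : E → ℝ≥0∞} (hρ : Measurable ρ)
    (hρ_conc : LogConcave ρ) : PrekopaLeindler (μ.withDensity ρ) := by
  intro a b ha hb hab f g h hf hg hh hle
  simp only [lintegral_withDensity_eq_lintegral_mul μ hρ, hf, hg, hh]
  refine hμ ha hb hab (hρ.mul hf) (hρ.mul hg) (hρ.mul hh) fun x y => ?_
  simp only [Pi.mul_apply]
  rw [ENNReal.mul_rpow_of_nonneg _ _ ha.le, ENNReal.mul_rpow_of_nonneg _ _ hb.le, mul_mul_mul_comm]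
  exact mul_le_mul' (hρ_conc ha hb hab x y) (hle x y)

theorem smul (hμ : PrekopaLeindler μ) (c : ℝ≥0∞) : PrekopaLeindler (c • μ) :=
  withDensity_const (μ := μ) c ▸ hμ.withDensity measurable_const (logConcave_const c)

theorem rpow_measure_mul_le_measure_add (hμ : PrekopaLeindler μ) {A B : Set E}
    (hA : NullMeasurableSet A μ) (hB : NullMeasurableSet B μ) {a b : ℝ} (ha : 0 < a) (hb : 0 < b)
    (hab : a + b = 1) : μ A ^ a * μ B ^ b ≤ μ (a • A + b • B) := by
  obtain ⟨A', hA'A, hA', hA'_ae⟩ := hA.exists_measurable_subset_ae_eq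
  obtain ⟨B', hB'B, hB', hB'_ae⟩ := hB.exists_measurable_subset_ae_eq
  set C := toMeasurable μ (a • A + b • B)
  have hC : MeasurableSet C := measurableSet_toMeasurable _ _
  rw [← measure_congr hA'_ae, ← measure_congr hB'_ae, ← measure_toMeasurable (a • A + b • B),
    ← lintegral_indicator_one hA', ← lintegral_indicator_one hB', ← lintegral_indicator_one hC]
  refine hμ ha hb hab (measurable_one.indicator hA') (measurable_one.indicator hB')
    (measurable_one.indicator hC) fun x y => ?_
  by_cases hx : x ∈ A'
  · by_cases hy : y ∈ B'
    · have hxy : a • x + b • y ∈ C := subset_toMeasurable _ _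
        (add_mem_add (smul_mem_smul_set (hA'A hx)) (smul_mem_smul_set (hB'B hy)))
      simp [hx, hy, hxy]
    · simp [hy, hb]
  · simp [hx, ha]

end PrekopaLeindler

theorem prekopaLeindler_pi (n : ℕ) : PrekopaLeindler (volume : Measure (Fin n → ℝ)) := by
  induction n with
  | zero => exact Measure.volume_pi_eq_dirac (0 : Fin 0 → ℝ) ▸ prekopaLeindler_dirac 0
  | succ n ih =>
    let e := Fin.consEquivL ℝ fun _ : Fin (n + 1) => ℝ
    have he : (MeasurableEquiv.piFinSuccAbove (fun _ : Fin (n + 1) => ℝ) 0).symm = (e : _ → _) :=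
      funext fun p => Fin.insertNth_zero' p.1 p.2
    have hmap : (volume.prod volume).map e = volume :=
      he ▸ (volume_preserving_piFinSuccAbove (fun _ : Fin (n + 1) => ℝ) 0).symm.map_eq
    exact hmap ▸ (prekopaLeindler_real.prod ih).map e.toLinearMap e.continuous.measurable

theorem prekopaLeindler_addHaar {E : Type*} [NormedAddCommGroup E] [NormedSpace ℝ E]
    [FiniteDimensional ℝ E] [MeasurableSpace E] [BorelSpace E] (μ : Measure E)
    [μ.IsAddHaarMeasure] : PrekopaLeindler μ := by
  let e : (Fin (Module.finrank ℝ E) → ℝ) ≃L[ℝ] E :=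
    (Module.finBasis ℝ E).equivFunL.symm
  rw [Measure.isAddLeftInvariant_eq_smul μ (volume.map e)]
  exact ((prekopaLeindler_pi _).map e.toLinearMap e.continuous.measurable).smul _

end PrekopaLeindler

theorem prekopaLeindler_gaussian (n : ℕ) : PrekopaLeindler (gaussian n) := by
  have hconv : ConvexOn ℝ univ fun x : EuclideanSpace ℝ (Fin n) => (2⁻¹ : ℝ) • ‖x‖ ^ 2 :=
    (convexOn_univ_norm.pow (fun _ _ => norm_nonneg _) 2).smul (by norm_num)
  have hdensity : LogConcave fun x : EuclideanSpace ℝ (Fin n) =>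
      ENNReal.ofReal ((2 * Real.pi) ^ (-(n : ℝ) / 2) * Real.exp (-‖x‖ ^ 2 / 2)) := by
    have hc : 0 ≤ (2 * Real.pi) ^ (-(n : ℝ) / 2) := by positivity
    have hexp (x : EuclideanSpace ℝ (Fin n)) : -‖x‖ ^ 2 / 2 = -((2⁻¹ : ℝ) • ‖x‖ ^ 2) := by
      rw [smul_eq_mul, inv_mul_eq_div, neg_div]
    simp only [ENNReal.ofReal_mul hc, hexp]
    exact (logConcave_const _).mul (logConcave_ofReal_exp_neg hconv)
  exact (prekopaLeindler_addHaar volume).withDensity (by fun_prop) hdensity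

theorem stmt4_general {n : ℕ} (K L : Set (EuclideanSpace ℝ (Fin n)))
    (hK : NullMeasurableSet K (gaussian n)) (hL : NullMeasurableSet L (gaussian n))
    (t : ℝ) (ht : t ∈ Set.Ioo (0 : ℝ) 1) :
    gaussian n K ^ (1 - t) * gaussian n L ^ t ≤ gaussian n ((1 - t) • K + t • L) :=
  (prekopaLeindler_gaussian n).rpow_measure_mul_le_measure_add hK hL (sub_pos.2 ht.2) ht.1
    (sub_add_cancel 1 t)

/-- Log-concavity (multiplicative Brunn–Minkowski) of the standard Gaussian measure on
convex sets: `γⁿ((1−t)K + tL) ≥ γⁿ(K)^(1−t) · γⁿ(L)^t` for `t ∈ (0,1)`. -/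
theorem stmt4 {n : ℕ} (K L : Set (EuclideanSpace ℝ (Fin n)))
    (hK : Convex ℝ K) (hL : Convex ℝ L) (t : ℝ) (ht : t ∈ Set.Ioo (0 : ℝ) 1) :
    gaussian n K ^ (1 - t) * gaussian n L ^ t ≤ gaussian n ((1 - t) • K + t • L) := by
  have hac : gaussian n ≪ volume := withDensity_absolutelyContinuous _ _
  exact stmt4_general K L ((hK.nullMeasurableSet volume).mono_ac hac)
    ((hL.nullMeasurableSet volume).mono_ac hac) t ht
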